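/- arXiv:1903.07024 — 7 statements merged into one kernel-verified Lean document; each statement's English description precedes it below -/
import Mathlib

section
/- For all integers i, k, l, j with i < k < l < j, we have 2^j · (l − i) > 2^l · (j − i). -/
/-!
With `b = 2` and `x = i`, dividing by `b ^ l` and writing `a = l - x`, `n = j - l` turns the
inequality into `a + n < b ^ n * a`. For `n = 1` this is the condition `1 < (b - 1) * a`, and
Bernoulli's inequality `1 + n * (b - 1) ≤ b ^ n` propagates it to all larger `n`.
-/

theorem add_natCast_lt_pow_mul {R : Type*} [Ring R] [LinearOrder R] [IsStrictOrderedRing R]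
    {a b : R} (hb : 1 < b) (hab : 1 < (b - 1) * a) {n : ℕ} (hn : 0 < n) :
    a + n < b ^ n * a := by
  have ha : 0 < a := pos_of_mul_pos_right (zero_lt_one.trans hab) (sub_pos.mpr hb).le
  have bernoulli : 1 + n * (b - 1) ≤ b ^ n :=
    one_add_mul_sub_le_pow (neg_one_lt_zero.trans (zero_lt_one.trans hb)).le n
  calc
    a + n < a + n * ((b - 1) * a) := by
      gcongr
      exact lt_mul_of_one_lt_right (Nat.cast_pos.mpr hn) hab
    _ = (1 + n * (b - 1)) * a := by rw [add_mul, one_mul, mul_assoc]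
    _ ≤ b ^ n * a := by gcongr

theorem pow_nested_ineq_general {K : Type*} [Field K] [LinearOrder K] [IsStrictOrderedRing K]
    {b x : K} {l j : ℤ} (hb : 1 < b) (hbl : 1 < (b - 1) * (l - x)) (hlj : l < j) :
    b ^ l * (j - x) < b ^ j * (l - x) := by
  have hb₀ : 0 < b := zero_lt_one.trans hb
  obtain ⟨n, hn, rfl⟩ : ∃ n : ℕ, 0 < n ∧ l + n = j := ⟨(j - l).toNat, by lia, by lia⟩
  calc
    b ^ l * (((l + n : ℤ) : K) - x) = b ^ l * ((l - x) + n) := by push_cast; ring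
    _ < b ^ l * (b ^ n * (l - x)) := by
      gcongr
      exact add_natCast_lt_pow_mul hb hbl hn
    _ = b ^ (l + n : ℤ) * (l - x) := by rw [zpow_add₀ hb₀.ne', zpow_natCast, mul_assoc]

theorem pow_nested_ineq (i k l j : ℤ) (hik : i < k) (hkl : k < l) (hlj : l < j) :
    (2 : ℝ) ^ j * ((l : ℝ) - (i : ℝ)) > (2 : ℝ) ^ l * ((j : ℝ) - (i : ℝ)) := by
  have hil : (1 : ℝ) < l - i := by exact_mod_cast (by lia : 1 < l - i)
  exact pow_nested_ineq_general one_lt_two (by linarith) hlj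
end

section
/- For all integers i, k, j, l with i < k < j < l, the closed segments seg(i,j) and seg(k,l) have nonempty intersection. -/
/-- The grounded segment associated to the integer interval `[i, j]`:
the closed line segment in `ℝ²` from `(i, 0)` to `(j, 2 ^ j)`. -/
def seg (i j : ℤ) : Set (ℝ × ℝ) :=
  segment ℝ ((i : ℝ), (0 : ℝ)) ((j : ℝ), (2 : ℝ) ^ j)

/-!
A segment from `(x, 0)` to `(y, a)` meets the one from `(z, 0)` to `(w, b)`, where `x ≤ z` and
`a ≤ b`, as soon as its top `(y, a)` lies on or to the right of the line through `(z, 0)` and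
`(w, b)`: it then reaches that line, at a height between `0` and `a ≤ b`. For overlapping intervals
`(j, 2 ^ j)` lies on or to the right of the line through `(k, 0)` and `(l, 2 ^ l)` because the slope
`2 ^ n / (n - k)` is nondecreasing in `n > k`.
-/

section

variable {𝕜 : Type*} [Field 𝕜] [LinearOrder 𝕜] [IsStrictOrderedRing 𝕜]

theorem exists_mem_segment_map_eq {E : Type*} [AddCommGroup E] [Module 𝕜 E] (f : E →ᵃ[𝕜] 𝕜)
    {u v : E} {c : 𝕜} (hu : f u ≤ c) (hv : c ≤ f v) : ∃ p ∈ segment 𝕜 u v, f p = c := by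
  have hc : c ∈ segment 𝕜 (f u) (f v) := by
    rw [segment_eq_Icc (hu.trans hv)]
    exact ⟨hu, hv⟩
  rwa [← image_segment 𝕜 f] at hc

theorem mem_grounded_segment {z w b : 𝕜} {p : 𝕜 × 𝕜} (hb : 0 < b)
    (hline : b * p.1 - (w - z) * p.2 = b * z) (hp : p.2 ∈ Set.Icc 0 b) :
    p ∈ segment 𝕜 (z, 0) (w, b) := by
  rw [segment_eq_image_lineMap]
  refine ⟨p.2 / b, ⟨div_nonneg hp.1 hb.le, div_le_one_of_le₀ hp.2 hb.le⟩, Prod.ext ?_ ?_⟩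
  · simp only [AffineMap.fst_lineMap, AffineMap.lineMap_apply_ring']
    field_simp
    linear_combination -hline
  · simp only [AffineMap.snd_lineMap, AffineMap.lineMap_apply_ring']
    field_simp
    ring

theorem grounded_segment_inter_nonempty {x y z w a b : 𝕜} (hxz : x ≤ z) (ha : 0 ≤ a)
    (hb : 0 < b) (hab : a ≤ b) (hright : a * (w - z) ≤ b * (y - z)) :
    (segment 𝕜 (x, 0) (y, a) ∩ segment 𝕜 (z, 0) (w, b)).Nonempty := by
  -- The line through `(z, 0)` and `(w, b)` is the level set `side = b * z`.
  let side : 𝕜 × 𝕜 →ₗ[𝕜] 𝕜 := b • LinearMap.fst 𝕜 𝕜 𝕜 - (w - z) • LinearMap.snd 𝕜 𝕜 𝕜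
  have side_apply (p : 𝕜 × 𝕜) : side p = b * p.1 - (w - z) * p.2 := rfl
  have hbottom : side (x, 0) ≤ b * z := by
    rw [side_apply]
    linarith [mul_le_mul_of_nonneg_left hxz hb.le]
  have htop : b * z ≤ side (y, a) := by
    rw [side_apply]
    linarith
  obtain ⟨p, hp, hline⟩ := exists_mem_segment_map_eq side.toAffineMap hbottom htop
  have hheight : p.2 ∈ Set.Icc 0 a := by
    rw [← segment_eq_Icc ha]
    exact (Prod.segment_subset _ _ hp).2
  exact ⟨p, hp, mem_grounded_segment hb hline (Set.Icc_subset_Icc_right hab hheight)⟩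

theorem monotoneOn_zpow_div_sub {b : 𝕜} (hb : 2 ≤ b) (k : ℤ) :
    MonotoneOn (fun n : ℤ ↦ b ^ n / ((n : 𝕜) - k)) (Set.Ioi k) := by
  refine monotoneOn_of_le_succ Set.ordConnected_Ioi fun n _ hn _ ↦ ?_
  have hb₀ : 0 < b := two_pos.trans_le hb
  have hgap : (1 : 𝕜) ≤ n - k := by
    rw [le_sub_iff_add_le']
    exact_mod_cast Int.add_one_le_iff.mpr hn
  have hdouble : (n : 𝕜) + 1 - k ≤ b * (n - k) := by
    linarith [mul_le_mul_of_nonneg_right hb (zero_le_one.trans hgap)]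
  simp only [Int.succ_eq_succ, Int.succ, Int.cast_add, Int.cast_one]
  rw [div_le_div_iff₀ (by linarith) (by linarith), zpow_add_one₀ hb₀.ne', mul_assoc]
  gcongr

end

theorem seg_overlap_inter (i k j l : ℤ) (hik : i < k) (hkj : k < j) (hjl : j < l) :
    (seg i j ∩ seg k l).Nonempty := by
  have hkl : k < l := hkj.trans hjl
  have hslope : (2 : ℝ) ^ j / (j - k) ≤ 2 ^ l / (l - k) :=
    monotoneOn_zpow_div_sub le_rfl k hkj hkl hjl.le
  rw [div_le_div_iff₀ (sub_pos.mpr (Int.cast_lt.mpr hkj))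
    (sub_pos.mpr (Int.cast_lt.mpr hkl))] at hslope
  have hheight : (2 : ℝ) ^ j ≤ 2 ^ l := zpow_le_zpow_right₀ one_le_two hjl.le
  exact grounded_segment_inter_nonempty (Int.cast_le.mpr hik.le) (by positivity) (by positivity)
    hheight hslope
end

section
/- Let i < j and k < l be integers such that i, j, k, l are pairwise distinct. Then the closed segments seg(i,j) and seg(k,l) have nonempty intersection if and only if the intervals [i,j] and [k,l] properly overlap, i.e., if and only if (i < k < j < l) or (k < i < l < j). -/
/-!
Two segments grounded on the `x`-axis meet if and only if their horizontal order at height `0` is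
reversed (weakly) at the height of the lower one. If `j < l`, the segment from `(k, 0)` to
`(l, r ^ l)` has, at height `r ^ j`, abscissa `k + (l - k) / r ^ (l - j)`. This exceeds `j` when
`j ≤ k`; when `k < j` it is at most `j`, because `l - k ≤ (j - k) * (1 + (l - j))` and
`1 + n ≤ r ^ n` for `2 ≤ r`. For `1 < r < 2` this last bound fails at `n = 1`, and the
characterization fails with it, for instance for `[-1, 1]` and `[0, 2]`.
-/

open AffineMap Set

section Segment

variable {𝕜 : Type*} [Field 𝕜] [LinearOrder 𝕜] [IsStrictOrderedRing 𝕜]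

theorem mk_mem_segment_zero_iff {E : Type*} [AddCommGroup E] [Module 𝕜 E] {a b x : E} {h y : 𝕜}
    (hh : 0 < h) :
    (x, y) ∈ segment 𝕜 (a, (0 : 𝕜)) (b, h) ↔ y ∈ Icc 0 h ∧ lineMap a b (y / h) = x := by
  have height_eq (t : 𝕜) : lineMap 0 h t = y ↔ t = y / h := by
    simp [lineMap_apply_ring, eq_div_iff hh.ne']
  have div_mem : y / h ∈ Icc (0 : 𝕜) 1 ↔ y ∈ Icc 0 h := by
    simp [le_div_iff₀ hh, div_le_one hh]
  simp only [segment_eq_image_lineMap, mem_image, Prod.ext_iff, fst_lineMap, snd_lineMap,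
    height_eq, ← div_mem]
  constructor
  · rintro ⟨_, ht, hx, rfl⟩
    exact ⟨ht, hx⟩
  · rintro ⟨ht, hx⟩
    exact ⟨_, ht, hx, rfl⟩

theorem exists_lineMap_eq_lineMap_iff {a b c d : 𝕜} :
    (∃ t ∈ Icc (0 : 𝕜) 1, lineMap a b t = lineMap c d t) ↔
      a ≤ c ∧ d ≤ b ∨ c ≤ a ∧ b ≤ d := by
  have sub_eq_zero_iff (t : 𝕜) :
      lineMap (a - c) (b - d) t = 0 ↔ lineMap a b t = lineMap c d t := by
    rw [← sub_eq_zero (a := lineMap a b t)]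
    simp only [lineMap_apply_ring]
    ring_nf
  calc (∃ t ∈ Icc (0 : 𝕜) 1, lineMap a b t = lineMap c d t)
      ↔ 0 ∈ segment 𝕜 (a - c) (b - d) := by
        simp only [segment_eq_image_lineMap, mem_image, sub_eq_zero_iff]
    _ ↔ a ≤ c ∧ d ≤ b ∨ c ≤ a ∧ b ≤ d := by
        simp only [segment_eq_uIcc, mem_uIcc, sub_nonpos, sub_nonneg]
        tauto

theorem segment_inter_segment_nonempty_iff_of_le {a b c d h H : 𝕜} (hh : 0 < h) (hH : h ≤ H) :
    (segment 𝕜 (a, (0 : 𝕜)) (b, h) ∩ segment 𝕜 (c, (0 : 𝕜)) (d, H)).Nonempty ↔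
      a ≤ c ∧ lineMap c d (h / H) ≤ b ∨ c ≤ a ∧ b ≤ lineMap c d (h / H) := by
  rw [← exists_lineMap_eq_lineMap_iff]
  have truncate (t : 𝕜) : lineMap c (lineMap c d (h / H)) t = lineMap c d (t * h / H) := by
    rw [lineMap_lineMap_right, mul_div_assoc]
  simp only [truncate]
  constructor
  · rintro ⟨⟨x, y⟩, hab, hcd⟩
    rw [mk_mem_segment_zero_iff hh] at hab
    rw [mk_mem_segment_zero_iff (hh.trans_le hH)] at hcd
    refine ⟨y / h, ⟨div_nonneg hab.1.1 hh.le, (div_le_one hh).2 hab.1.2⟩, ?_⟩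
    rw [div_mul_cancel₀ _ hh.ne', hab.2, hcd.2]
  · rintro ⟨t, ⟨ht₀, ht₁⟩, heq⟩
    have height_nonneg : 0 ≤ t * h := mul_nonneg ht₀ hh.le
    have height_le : t * h ≤ h := mul_le_of_le_one_left hh.le ht₁
    refine ⟨(lineMap a b t, t * h), (mk_mem_segment_zero_iff hh).2 ⟨⟨height_nonneg, height_le⟩, ?_⟩,
      (mk_mem_segment_zero_iff (hh.trans_le hH)).2
        ⟨⟨height_nonneg, height_le.trans hH⟩, heq.symm⟩⟩
    rw [mul_div_cancel_right₀ _ hh.ne']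

end Segment

section ZPow

variable {𝕜 : Type*} [Field 𝕜] [LinearOrder 𝕜] [IsStrictOrderedRing 𝕜] {r : 𝕜} {i j k l : ℤ}

theorem one_add_intCast_le_zpow (hr : 2 ≤ r) (n : ℤ) : 1 + (n : 𝕜) ≤ r ^ n := by
  rcases le_or_gt 0 n with hn | hn
  · lift n to ℕ using hn
    rw [Int.cast_natCast, zpow_natCast]
    calc 1 + (n : 𝕜) ≤ 1 + n * (r - 1) := by
          gcongr
          exact le_mul_of_one_le_right n.cast_nonneg (by linarith)
      _ ≤ r ^ n := one_add_mul_sub_le_pow (by linarith) n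
  · have : 1 + (n : 𝕜) ≤ 0 := by exact_mod_cast (by lia : 1 + n ≤ 0)
    exact this.trans (zpow_nonneg (by linarith) n)

theorem lineMap_intCast_zpow_div_zpow_le (hr : 2 ≤ r) (hkj : k < j) (hjl : j ≤ l) :
    lineMap (k : 𝕜) l (r ^ j / r ^ l) ≤ j := by
  have hr₀ : 0 < r := two_pos.trans_le hr
  have hkj' : (1 : 𝕜) ≤ j - k := by exact_mod_cast (by lia : 1 ≤ j - k)
  have hjl' : (0 : 𝕜) ≤ l - j := by exact_mod_cast (by lia : 0 ≤ l - j)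
  have bound : (l : 𝕜) - k ≤ (j - k) * r ^ (l - j) :=
    calc (l : 𝕜) - k = (j - k) + 1 * (l - j) := by ring
      _ ≤ (j - k) + (j - k) * (l - j) := by gcongr
      _ = (j - k) * (1 + ((l - j : ℤ) : 𝕜)) := by push_cast; ring
      _ ≤ (j - k) * r ^ (l - j) := by
        gcongr
        exact one_add_intCast_le_zpow hr _
  calc lineMap (k : 𝕜) l (r ^ j / r ^ l) = (l - k) / r ^ (l - j) + k := by
        rw [lineMap_apply_ring', zpow_sub₀ hr₀.ne', div_div_eq_mul_div]
        ring
    _ ≤ (j - k) + k := by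
        gcongr
        exact (div_le_iff₀ (zpow_pos hr₀ _)).2 bound
    _ = j := sub_add_cancel _ _

/-- The grounded segment from `(i, 0)` to `(j, r ^ j)` in the plane `𝕜 × 𝕜`, for an arbitrary
base `r`; `seg i j` is the case `r = 2` over `ℝ`. -/
def zpowSegment (r : 𝕜) (i j : ℤ) : Set (𝕜 × 𝕜) :=
  segment 𝕜 ((i : 𝕜), (0 : 𝕜)) ((j : 𝕜), r ^ j)

theorem zpowSegment_inter_nonempty_iff_of_lt (hr : 2 ≤ r) (hij : i < j) (hkl : k < l)
    (hik : i ≠ k) (hjl : j < l) :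
    (zpowSegment r i j ∩ zpowSegment r k l).Nonempty ↔ i < k ∧ k < j := by
  have hr₀ : 0 < r := two_pos.trans_le hr
  have hpow : r ^ j < r ^ l := zpow_lt_zpow_right₀ (one_lt_two.trans_le hr) hjl
  have ratio_pos : 0 < r ^ j / r ^ l := div_pos (zpow_pos hr₀ j) (zpow_pos hr₀ l)
  have ratio_lt_one : r ^ j / r ^ l < 1 := (div_lt_one (zpow_pos hr₀ l)).2 hpow
  rw [zpowSegment, zpowSegment,
    segment_inter_segment_nonempty_iff_of_le (zpow_pos hr₀ j) hpow.le]
  set x := lineMap (k : 𝕜) l (r ^ j / r ^ l)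
  have k_lt_x : (k : 𝕜) < x := (left_lt_lineMap_iff_lt ratio_pos).2 (by exact_mod_cast hkl)
  constructor
  · rintro (⟨hik', hxj⟩ | ⟨hki, hjx⟩)
    · exact ⟨lt_of_le_of_ne (by exact_mod_cast hik') hik, by exact_mod_cast k_lt_x.trans_le hxj⟩
    · -- Compare with the segment from `(i, 0)` to `(l, r ^ l)`, which at height `r ^ j` lies
      -- strictly to the right of the one from `(k, 0)`.
      have hki' : (k : 𝕜) < i := lt_of_le_of_ne hki (by exact_mod_cast hik.symm)
      have x_lt_j : x < j := (lineMap_strict_mono_left hki' ratio_lt_one).trans_le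
        (lineMap_intCast_zpow_div_zpow_le hr hij hjl.le)
      exact absurd hjx x_lt_j.not_ge
  · rintro ⟨hik', hkj⟩
    exact .inl ⟨by exact_mod_cast hik'.le, lineMap_intCast_zpow_div_zpow_le hr hkj hjl.le⟩

theorem seg_inter_iff_proper_overlap_general (hr : 2 ≤ r) (hij : i < j) (hkl : k < l)
    (hik : i ≠ k) (hjl : j ≠ l) :
    (zpowSegment r i j ∩ zpowSegment r k l).Nonempty ↔
      (i < k ∧ k < j ∧ j < l) ∨ (k < i ∧ i < l ∧ l < j) := by
  rcases hjl.lt_or_gt with hjl | hlj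
  · rw [zpowSegment_inter_nonempty_iff_of_lt hr hij hkl hik hjl]
    lia
  · rw [inter_comm, zpowSegment_inter_nonempty_iff_of_lt hr hkl hij hik.symm hlj]
    lia

end ZPow

theorem seg_inter_iff_proper_overlap (i j k l : ℤ) (hij : i < j) (hkl : k < l)
    (hik : i ≠ k) (hil : i ≠ l) (hjk : j ≠ k) (hjl : j ≠ l) :
    (seg i j ∩ seg k l).Nonempty ↔
      (i < k ∧ k < j ∧ j < l) ∨ (k < i ∧ i < l ∧ l < j) :=
  seg_inter_iff_proper_overlap_general le_rfl hij hkl hik hjl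
end

section
/- Let G be a simple graph on vertex set Fin n, and suppose there are functions L, R : Fin n → ℤ with L v < R v for every v, such that the 2n integers L v, R v (over all v) are pairwise distinct, and such that for all u ≠ v, u and v are adjacent in G if and only if the intervals [L u, R u] and [L v, R v] properly overlap (i.e., L u < L v < R u < R v or L v < L u < R v < R u). Then there exist functions p, q : Fin n → ℝ² such that for every v the point p v lies on the x-axis (second coordinate 0), the point q v lies in the open upper half-plane (second coordinate > 0), and for all u ≠ v the closed segments from p u to q u and from p v to q v have nonempty intersection if and only if u and v are adjacent in G. (In the paper's construction one takes p v = (L v, 0) and q v = (R v, 2^{R v}).) -/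
/-!
For a fixed integer `a`, the slope `2 ^ x / (x - a)` of the segment from `(a, 0)` to `(x, 2 ^ x)`
is nondecreasing in the integer `x > a`, and strictly increasing from `x = a + 2` on. Let `[a, b]`
and `[c, d]` be intervals with `a < c < b`. The second segment starts strictly below the first, so
the two meet exactly when the first is no longer strictly above at the last abscissa they share. If
the intervals overlap, this abscissa is `b`, where the second segment has reached height at least
`2 ^ b` because slopes from `(c, 0)` do not decrease. If `[c, d]` is nested in `[a, b]`, it is `d`,
where the first segment is still strictly above `2 ^ d` because slopes from `(a, 0)` increase.
-/

section LinearOrderedField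

variable {𝕜 : Type*} [Field 𝕜] [LinearOrder 𝕜] [IsStrictOrderedRing 𝕜]

theorem mem_segment_of_slope_iff {a b s : 𝕜} (hab : a ≤ b) {z : 𝕜 × 𝕜} :
    z ∈ segment 𝕜 (a, 0) (b, s * (b - a)) ↔ z.1 ∈ Set.Icc a b ∧ z.2 = s * (z.1 - a) := by
  obtain ⟨x, y⟩ := z
  simp only [← segment_eq_Icc hab, segment_eq_image', Set.mem_image, Prod.mk_sub_mk,
    Prod.smul_mk, Prod.mk_add_mk, Prod.mk.injEq, smul_eq_mul]
  constructor
  · rintro ⟨θ, hθ, rfl, rfl⟩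
    exact ⟨⟨θ, hθ, rfl⟩, by ring⟩
  · rintro ⟨⟨θ, hθ, rfl⟩, rfl⟩
    exact ⟨θ, hθ, rfl, by ring⟩

theorem slope_lt_slope_of_height_le {a c s t x : 𝕜} (hs : 0 < s) (hac : a < c) (hcx : c < x)
    (h : s * (x - a) ≤ t * (x - c)) : s < t := by
  have : s * (x - c) < t * (x - c) := lt_of_lt_of_le (by gcongr) h
  exact lt_of_mul_lt_mul_right this (sub_pos.2 hcx).le

theorem segment_inter_segment_nonempty_iff_height_le {a b c d s t : 𝕜} (hs : 0 < s)
    (hac : a < c) (hab : a ≤ b) (hcd : c < d) :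
    (segment 𝕜 (a, 0) (b, s * (b - a)) ∩ segment 𝕜 (c, 0) (d, t * (d - c))).Nonempty ↔
      c < b ∧ s * (min b d - a) ≤ t * (min b d - c) := by
  simp only [Set.Nonempty, Set.mem_inter_iff, mem_segment_of_slope_iff hab,
    mem_segment_of_slope_iff hcd.le]
  constructor
  · rintro ⟨⟨x, y⟩, ⟨⟨-, hxb⟩, hy⟩, ⟨⟨hcx, hxd⟩, hy'⟩⟩
    have hxy : s * (x - a) = t * (x - c) := hy.symm.trans hy'
    have hcx : c < x := by
      refine lt_of_le_of_ne hcx fun h ↦ ?_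
      rw [← h, sub_self, mul_zero] at hxy
      exact (mul_pos hs (sub_pos.2 hac)).ne' hxy
    have hst : s ≤ t := (slope_lt_slope_of_height_le hs hac hcx hxy.le).le
    have hxm : 0 ≤ min b d - x := sub_nonneg.2 (le_min hxb hxd)
    refine ⟨hcx.trans_le hxb, ?_⟩
    calc s * (min b d - a) = s * (x - a) + s * (min b d - x) := by ring
      _ ≤ t * (x - c) + t * (min b d - x) := by rw [hxy]; gcongr
      _ = t * (min b d - c) := by ring
  · rintro ⟨hcb, hm⟩
    have hst : 0 < t - s :=
      sub_pos.2 (slope_lt_slope_of_height_le hs hac (lt_min hcb hcd) hm)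
    -- `c + w` is the abscissa of the crossing point.
    obtain ⟨w, hw⟩ : ∃ w, w * (t - s) = s * (c - a) :=
      ⟨s * (c - a) / (t - s), div_mul_cancel₀ _ hst.ne'⟩
    have hw_nonneg : 0 ≤ w :=
      nonneg_of_mul_nonneg_left (hw ▸ (mul_pos hs (sub_pos.2 hac)).le) hst
    have hw_le : w ≤ min b d - c := le_of_mul_le_mul_right (by linarith) hst
    have hwb : c + w ≤ b := by linarith [min_le_left b d]
    have hwd : c + w ≤ d := by linarith [min_le_right b d]
    refine ⟨(c + w, t * w), ⟨⟨by linarith, hwb⟩, by linear_combination hw⟩,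
      ⟨⟨by linarith, hwd⟩, by ring⟩⟩

theorem sub_add_one_mul_two_zpow_le {b d : ℤ} (hbd : b ≤ d) :
    ((d : 𝕜) - b + 1) * 2 ^ b ≤ 2 ^ d := by
  obtain ⟨k, rfl⟩ := Int.le.dest hbd
  have hk : (k : 𝕜) + 1 ≤ 2 ^ k := by exact_mod_cast Nat.lt_two_pow_self (n := k)
  calc (((b + k : ℤ) : 𝕜) - b + 1) * 2 ^ b = (k + 1) * 2 ^ b := by push_cast; ring
    _ ≤ 2 ^ k * 2 ^ b := by gcongr
    _ = 2 ^ (b + k) := by rw [zpow_add₀ two_ne_zero, zpow_natCast, mul_comm]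

theorem two_zpow_div_sub_le {a b d : ℤ} (hab : a < b) (hbd : b ≤ d) :
    (2 : 𝕜) ^ b / (b - a) ≤ 2 ^ d / (d - a) := by
  have hab' : (a : 𝕜) + 1 ≤ b := by exact_mod_cast hab
  have hbd' : (b : 𝕜) ≤ d := by exact_mod_cast hbd
  rw [div_le_div_iff₀ (by linarith) (by linarith)]
  calc (2 : 𝕜) ^ b * (d - a) ≤ 2 ^ b * ((d - b + 1) * (b - a)) := by
        gcongr
        linarith [mul_nonneg (sub_nonneg.2 hbd') (sub_nonneg.2 hab')]
    _ = (d - b + 1) * 2 ^ b * (b - a) := by ring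
    _ ≤ 2 ^ d * (b - a) :=
        mul_le_mul_of_nonneg_right (sub_add_one_mul_two_zpow_le hbd) (by linarith)

theorem two_zpow_div_sub_lt {a b d : ℤ} (hab : a + 1 < b) (hbd : b < d) :
    (2 : 𝕜) ^ b / (b - a) < 2 ^ d / (d - a) := by
  have hab' : (a : 𝕜) + 1 < b := by exact_mod_cast hab
  have hbd' : (b : 𝕜) < d := by exact_mod_cast hbd
  rw [div_lt_div_iff₀ (by linarith) (by linarith)]
  calc (2 : 𝕜) ^ b * (d - a) < 2 ^ b * ((d - b + 1) * (b - a)) := by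
        gcongr
        linarith [mul_pos (sub_pos.2 hbd') (sub_pos.2 hab')]
    _ = (d - b + 1) * 2 ^ b * (b - a) := by ring
    _ ≤ 2 ^ d * (b - a) :=
        mul_le_mul_of_nonneg_right (sub_add_one_mul_two_zpow_le hbd.le) (by linarith)

variable (𝕜) in
/-- The segment representing the interval `[a, b]`: it joins the point `(a, 0)` of the grounding
line to the point `(b, 2 ^ b)`. -/
def groundedSegment (a b : ℤ) : Set (𝕜 × 𝕜) :=
  segment 𝕜 ((a : 𝕜), (0 : 𝕜)) ((b : 𝕜), (2 : 𝕜) ^ b)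

theorem groundedSegment_eq_segment_of_slope {a b : ℤ} (hab : a < b) :
    groundedSegment 𝕜 a b = segment 𝕜 ((a : 𝕜), 0) (b, (2 : 𝕜) ^ b / (b - a) * (b - a)) := by
  have hne : (b : 𝕜) - a ≠ 0 := sub_ne_zero.2 (by exact_mod_cast hab.ne')
  rw [groundedSegment, div_mul_cancel₀ _ hne]

theorem groundedSegment_inter_nonempty_iff {a b c d : ℤ} (hab : a < b) (hcd : c < d)
    (hac : a < c) (hbd : b ≠ d) :
    (groundedSegment 𝕜 a b ∩ groundedSegment 𝕜 c d).Nonempty ↔ c < b ∧ b < d := by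
  have hab' : (a : 𝕜) < b := by exact_mod_cast hab
  have hcd' : (c : 𝕜) < d := by exact_mod_cast hcd
  have hac' : (a : 𝕜) < c := by exact_mod_cast hac
  have hslope : (0 : 𝕜) < 2 ^ b / (b - a) := div_pos (by positivity) (sub_pos.2 hab')
  rw [groundedSegment_eq_segment_of_slope hab, groundedSegment_eq_segment_of_slope hcd,
    segment_inter_segment_nonempty_iff_height_le hslope hac' hab'.le hcd', Int.cast_lt]
  refine and_congr_right fun hcb ↦ ?_
  rcases hbd.lt_or_gt with hbd | hdb
  · have hcb' : (c : 𝕜) < b := by exact_mod_cast hcb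
    rw [min_eq_left (by exact_mod_cast hbd.le), div_mul_cancel₀ _ (sub_pos.2 hab').ne',
      ← div_le_iff₀ (sub_pos.2 hcb')]
    exact iff_of_true (two_zpow_div_sub_le hcb hbd.le) hbd
  · rw [min_eq_right (by exact_mod_cast hdb.le), div_mul_cancel₀ _ (sub_pos.2 hcd').ne',
      ← le_div_iff₀ (sub_pos.2 (hac'.trans hcd'))]
    exact iff_of_false (two_zpow_div_sub_lt (by lia) hdb).not_ge hdb.not_gt

end LinearOrderedField

theorem overlap_graph_has_grounded_segment_representation_general
    {V : Type*} (G : SimpleGraph V) (L R : V → ℤ) (hLR : ∀ v, L v < R v)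
    (hL : Function.Injective L) (hR : Function.Injective R)
    (hadj : ∀ u v : V, u ≠ v →
      (G.Adj u v ↔ (L u < L v ∧ L v < R u ∧ R u < R v) ∨
                   (L v < L u ∧ L u < R v ∧ R v < R u))) :
    ∃ p q : V → ℝ × ℝ,
      (∀ v, (p v).2 = 0) ∧ (∀ v, (q v).2 > 0) ∧
      ∀ u v : V, u ≠ v →
        ((segment ℝ (p u) (q u) ∩ segment ℝ (p v) (q v)).Nonempty ↔ G.Adj u v) := by
  refine ⟨fun v ↦ (L v, 0), fun v ↦ (R v, 2 ^ R v), fun _ ↦ rfl,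
    fun v ↦ zpow_pos two_pos (R v), fun u v huv ↦ ?_⟩
  change (groundedSegment ℝ (L u) (R u) ∩ groundedSegment ℝ (L v) (R v)).Nonempty ↔ _
  wlog hlt : L u < L v generalizing u v
  · rw [Set.inter_comm, G.adj_comm]
    exact this v u huv.symm ((hL.ne huv).lt_of_le' (not_lt.1 hlt))
  rw [groundedSegment_inter_nonempty_iff (hLR u) (hLR v) hlt (hR.ne huv), hadj u v huv]
  simp only [hlt, hlt.not_gt, true_and, false_and, or_false]

theorem overlap_graph_has_grounded_segment_representation
    (n : ℕ) (G : SimpleGraph (Fin n)) (L R : Fin n → ℤ)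
    (hLR : ∀ v, L v < R v)
    (hdistinct : Function.Injective (Sum.elim L R : Fin n ⊕ Fin n → ℤ))
    (hadj : ∀ u v : Fin n, u ≠ v →
      (G.Adj u v ↔ (L u < L v ∧ L v < R u ∧ R u < R v) ∨
                   (L v < L u ∧ L u < R v ∧ R v < R u))) :
    ∃ p q : Fin n → ℝ × ℝ,
      (∀ v, (p v).2 = 0) ∧ (∀ v, (q v).2 > 0) ∧
      ∀ u v : Fin n, u ≠ v →
        ((segment ℝ (p u) (q u) ∩ segment ℝ (p v) (q v)).Nonempty ↔ G.Adj u v) :=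
  overlap_graph_has_grounded_segment_representation_general G L R hLR
    (hdistinct.comp Sum.inl_injective) (hdistinct.comp Sum.inr_injective) hadj
end

section
/- The wheel graph W₅ is a grounded L graph: there exist functions a, h, w from the six vertices of W₅ to ℝ, with h v > 0 and w v > 0 for every vertex v, such that for all distinct vertices u, v the shapes Λ(a u, h u, w u) and Λ(a v, h v, w v) have nonempty intersection if and only if u and v are adjacent in W₅. -/
/-- The grounded L-shape with foot `(a, 0)`, height `h` and horizontal arm length `w`:
`({a} × [0, h]) ∪ ([a, a + w] × {h})`. -/
def Lshape (a h w : ℝ) : Set (ℝ × ℝ) :=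
  ({a} ×ˢ Set.Icc 0 h) ∪ (Set.Icc a (a + w) ×ˢ {h})

/-- The wheel graph `W₅`: vertex `0` is the hub, adjacent to all of `1,…,5`, and
`1,2,3,4,5` form a 5-cycle. -/
def W5 : SimpleGraph (Fin 6) :=
  SimpleGraph.fromRel (fun u v =>
    u = 0 ∨ (u = 1 ∧ v = 2) ∨ (u = 2 ∧ v = 3) ∨ (u = 3 ∧ v = 4) ∨
      (u = 4 ∧ v = 5) ∨ (u = 5 ∧ v = 1))

/-!
When one of two grounded L-shapes has its foot strictly to the left of the other's, they can only
meet by the arm of the left shape crossing the stem of the right one. Hence a family with distinct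
feet has an intersection pattern determined by inequalities between feet, heights and widths, and
W₅ can be realized with natural-number parameters. The hub is the lowest and leftmost shape, with an
arm crossing every other stem; the rim vertices stand from left to right in the order
1, 2, 4, 5, 3, and the stems that an arm has to avoid are either too low or out of its reach.
-/

lemma mem_Lshape {a h w x y : ℝ} :
    (x, y) ∈ Lshape a h w ↔ (x = a ∧ 0 ≤ y ∧ y ≤ h) ∨ ((a ≤ x ∧ x ≤ a + w) ∧ y = h) :=
  Iff.rfl

lemma Lshape_inter_nonempty_iff_of_foot_lt {a h w a' h' w' : ℝ} (hh : 0 ≤ h) (haa' : a < a') :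
    (Lshape a h w ∩ Lshape a' h' w').Nonempty ↔ a' ≤ a + w ∧ h ≤ h' := by
  constructor
  · rintro ⟨⟨x, y⟩, hleft, hright⟩
    have foot_le : a' ≤ x := by
      rcases mem_Lshape.1 hright with ⟨hx, -⟩ | ⟨⟨hx, -⟩, -⟩
      exacts [hx.ge, hx]
    have le_height : y ≤ h' := by
      rcases mem_Lshape.1 hright with ⟨-, -, hy⟩ | ⟨-, hy⟩
      exacts [hy, hy.le]
    rcases mem_Lshape.1 hleft with ⟨hx, -⟩ | ⟨⟨-, hx⟩, hy⟩
    · exact absurd (haa'.trans_le foot_le) hx.not_gt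
    · exact ⟨foot_le.trans hx, hy.ge.trans le_height⟩
  · rintro ⟨hreach, hheight⟩
    exact ⟨(a', h), mem_Lshape.2 (.inr ⟨⟨haa'.le, hreach⟩, rfl⟩),
      mem_Lshape.2 (.inl ⟨rfl, hh, hheight⟩)⟩

lemma Lshape_inter_nonempty_iff_adj {V : Type*} {G : SimpleGraph V} {a h w : V → ℝ}
    (ha : Function.Injective a) (hh : ∀ v, 0 ≤ h v)
    (hadj : ∀ u v, a u < a v → (a v ≤ a u + w u ∧ h u ≤ h v ↔ G.Adj u v))
    {u v : V} (huv : u ≠ v) :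
    (Lshape (a u) (h u) (w u) ∩ Lshape (a v) (h v) (w v)).Nonempty ↔ G.Adj u v := by
  wlog hlt : a u < a v generalizing u v
  · rw [Set.inter_comm, G.adj_comm]
    exact this huv.symm ((ha.ne huv).lt_or_gt.resolve_left hlt)
  · exact (Lshape_inter_nonempty_iff_of_foot_lt (hh u) hlt).trans (hadj u v hlt)

instance : DecidableRel W5.Adj :=
  inferInstanceAs (DecidableRel (SimpleGraph.fromRel _).Adj)

theorem W5_is_grounded_L_graph :
    ∃ a h w : Fin 6 → ℝ,
      (∀ v, 0 < h v) ∧ (∀ v, 0 < w v) ∧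
      ∀ u v : Fin 6, u ≠ v →
        ((Lshape (a u) (h u) (w u) ∩ Lshape (a v) (h v) (w v)).Nonempty ↔ W5.Adj u v) := by
  let a : Fin 6 → ℕ := ![0, 1, 2, 6, 3, 4]
  let h : Fin 6 → ℕ := ![1, 3, 5, 6, 2, 4]
  let w : Fin 6 → ℕ := ![6, 3, 4, 1, 3, 1]
  have ha : Function.Injective fun v ↦ (a v : ℝ) :=
    Nat.cast_injective.comp (by decide : Function.Injective a)
  have hh : ∀ v, 0 < h v := by decide
  have hw : ∀ v, 0 < w v := by decide
  have hadj : ∀ u v, a u < a v → (a v ≤ a u + w u ∧ h u ≤ h v ↔ W5.Adj u v) := by decide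
  have hadj_cast : ∀ u v, (a u : ℝ) < a v →
      ((a v : ℝ) ≤ a u + w u ∧ (h u : ℝ) ≤ h v ↔ W5.Adj u v) := by
    exact_mod_cast hadj
  exact ⟨fun v ↦ a v, fun v ↦ h v, fun v ↦ w v, fun v ↦ Nat.cast_pos.2 (hh v),
    fun v ↦ Nat.cast_pos.2 (hw v), fun _ _ huv ↦
      Lshape_inter_nonempty_iff_adj ha (fun v ↦ Nat.cast_nonneg (h v)) hadj_cast huv⟩
end

section
/- The cycle graph C₅ is a grounded square-L graph: there exist functions a, h from the five vertices of C₅ to ℝ, with h v > 0 for every vertex v, such that for all distinct vertices u, v the shapes Λ(a u, h u, h u) and Λ(a v, h v, h v) have nonempty intersection if and only if u and v are adjacent in C₅. -/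
/-- The cycle graph `C₅` on `Fin 5`: `v` is adjacent to `v + 1` (indices mod 5). -/
def C5 : SimpleGraph (Fin 5) :=
  SimpleGraph.fromRel (fun u v => v = u + 1)

/-!
Of two grounded L-shapes with distinct feet, the left one can only meet the right one by running its
horizontal arm into the right one's vertical segment: its arm must be long enough to get there and
low enough to hit it. Realize `C₅` by placing the feet in the order `0, 1, 4, 3, 2`, so that the
cycle is the union of the left-to-right paths `0 → 1 → 2` and `0 → 4 → 3 → 2`. Vertex `1` misses
`4` and `3` by being taller than both; the other non-adjacent pairs are separated because the left
arm is too short.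
-/

theorem Lshape_inter_nonempty_iff {a h w a' h' w' : ℝ} (hh : 0 ≤ h) (haa' : a < a') :
    (Lshape a h w ∩ Lshape a' h' w').Nonempty ↔ h ≤ h' ∧ a' ≤ a + w := by
  constructor
  · rintro ⟨⟨x, y⟩, hleft, hright⟩
    simp only [Lshape, Set.mem_union, Set.mem_prod, Set.mem_singleton_iff, Set.mem_Icc]
      at hleft hright
    have foot_le_x : a' ≤ x := by
      rcases hright with ⟨rfl, -⟩ | ⟨⟨hx, -⟩, -⟩
      exacts [le_rfl, hx]
    have y_le_height : y ≤ h' := by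
      rcases hright with ⟨-, -, hy⟩ | ⟨-, hy⟩
      exacts [hy, hy.le]
    rcases hleft with ⟨rfl, -⟩ | ⟨⟨-, x_le_tip⟩, rfl⟩
    · exact absurd haa' foot_le_x.not_gt
    · exact ⟨y_le_height, foot_le_x.trans x_le_tip⟩
  · rintro ⟨h_le_h', htip⟩
    exact ⟨(a', h), Or.inr ⟨⟨haa'.le, htip⟩, rfl⟩, Or.inl ⟨rfl, hh, h_le_h'⟩⟩

namespace C5

/-- The abscissa of the foot of the square L-shape representing a vertex of `C₅`; natural numbers
make the comparisons between shapes decidable. -/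
def foot : Fin 5 → ℕ := ![0, 1, 7, 4, 2]

/-- The common length of the two segments of the square L-shape representing a vertex of `C₅`. -/
def height : Fin 5 → ℕ := ![3, 7, 8, 5, 4]

theorem foot_injective : Function.Injective foot := by decide

theorem height_pos : ∀ v, 0 < height v := by decide

theorem adj_iff_of_foot_lt :
    ∀ {u v : Fin 5}, foot u < foot v →
      (C5.Adj u v ↔ height u ≤ height v ∧ foot v ≤ foot u + height u) := by
  simp only [C5, SimpleGraph.fromRel_adj]
  decide

end C5

theorem C5_is_grounded_square_L_graph :
    ∃ a h : Fin 5 → ℝ,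
      (∀ v, 0 < h v) ∧
      ∀ u v : Fin 5, u ≠ v →
        ((Lshape (a u) (h u) (h u) ∩ Lshape (a v) (h v) (h v)).Nonempty ↔ C5.Adj u v) := by
  refine ⟨fun v => C5.foot v, fun v => C5.height v, fun v => Nat.cast_pos.mpr (C5.height_pos v),
    fun u v huv => ?_⟩
  wlog foot_lt : C5.foot u < C5.foot v generalizing u v
  · rw [Set.inter_comm, C5.adj_comm]
    exact this v u huv.symm ((C5.foot_injective.ne huv.symm).lt_of_le (not_lt.mp foot_lt))
  rw [Lshape_inter_nonempty_iff (Nat.cast_nonneg _) (Nat.cast_lt.mpr foot_lt),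
    C5.adj_iff_of_foot_lt foot_lt]
  beta_reduce
  norm_cast
end

section
/- Let G be a graph on a finite vertex set V with a grounded square-L representation given by a, h : V → ℝ with h v > 0 for all v, i.e., for all distinct u, v ∈ V, u and v are adjacent in G if and only if Λ(a u, h u, h u) ∩ Λ(a v, h v, h v) ≠ ∅. Assume a and h are injective, and let w ∈ V be the vertex with maximum height h w. Then every neighbor v of w in G satisfies a v < a w, h v < h w, and a w ≤ a v + h v; that is, the shape of every neighbor of the highest vertex intersects the highest shape from the left. -/
section Lshape

variable {a b h k l m : ℝ} {p : ℝ × ℝ}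

theorem mem_Lshape_s11 :
    p ∈ Lshape a h l ↔ p.1 = a ∧ p.2 ∈ Set.Icc 0 h ∨ p.1 ∈ Set.Icc a (a + l) ∧ p.2 = h :=
  Iff.rfl

theorem snd_le_of_mem_Lshape (hp : p ∈ Lshape a h l) : p.2 ≤ h := by
  rcases mem_Lshape_s11.1 hp with ⟨-, -, hle⟩ | ⟨-, heq⟩
  · exact hle
  · exact heq.le

theorem mem_Lshape_iff_of_fst_ne (hne : p.1 ≠ a) :
    p ∈ Lshape a h l ↔ p.1 ∈ Set.Ioc a (a + l) ∧ p.2 = h := by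
  simp only [mem_Lshape_s11, hne, false_and, false_or, Set.mem_Icc, Set.mem_Ioc,
    hne.symm.le_iff_lt]

/- The lower shape stays strictly below the arm of the higher one, so they can only meet on the
stem of the higher; as the feet differ, the lower shape has to get there along its arm. -/
theorem Lshape_inter_nonempty_iff_of_height_lt (hab : a ≠ b) (hkh : k < h) :
    (Lshape a h l ∩ Lshape b k m).Nonempty ↔ 0 ≤ k ∧ a ∈ Set.Ioc b (b + m) := by
  constructor
  · rintro ⟨p, hp_high, hp_low⟩
    have hp_lt : p.2 < h := (snd_le_of_mem_Lshape hp_low).trans_lt hkh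
    obtain ⟨hfst, hsnd_nonneg, -⟩ : p.1 = a ∧ p.2 ∈ Set.Icc 0 h :=
      (mem_Lshape_s11.1 hp_high).resolve_right fun harm => hp_lt.ne harm.2
    obtain ⟨hreach, hsnd⟩ := (mem_Lshape_iff_of_fst_ne (hfst.trans_ne hab)).1 hp_low
    exact ⟨hsnd ▸ hsnd_nonneg, hfst ▸ hreach⟩
  · rintro ⟨hk, hreach⟩
    exact ⟨(a, k), mem_Lshape_s11.2 (.inl ⟨rfl, hk, hkh.le⟩),
      (mem_Lshape_iff_of_fst_ne hab).2 ⟨hreach, rfl⟩⟩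

end Lshape

theorem neighbors_of_highest_intersect_from_left_general
    {V : Type*} (G : SimpleGraph V) (a h l : V → ℝ)
    (hrep : ∀ u v : V, G.Adj u v →
      (Lshape (a u) (h u) (l u) ∩ Lshape (a v) (h v) (l v)).Nonempty)
    (ha : Function.Injective a) (hh : Function.Injective h)
    (w : V) (hmax : ∀ v, h v ≤ h w) (v : V) (hwv : G.Adj w v) :
    a v < a w ∧ h v < h w ∧ a w ≤ a v + l v := by
  have hlower : h v < h w := (hmax v).lt_of_ne (hh.ne hwv.ne')
  obtain ⟨-, hleft, hreach⟩ :=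
    (Lshape_inter_nonempty_iff_of_height_lt (ha.ne hwv.ne) hlower).1 (hrep w v hwv)
  exact ⟨hleft, hlower, hreach⟩

theorem neighbors_of_highest_intersect_from_left
    {V : Type*} [Fintype V] (G : SimpleGraph V) (a h : V → ℝ)
    (hpos : ∀ v, 0 < h v)
    (hrep : ∀ u v : V, u ≠ v →
      (G.Adj u v ↔ (Lshape (a u) (h u) (h u) ∩ Lshape (a v) (h v) (h v)).Nonempty))
    (ha : Function.Injective a) (hh : Function.Injective h)
    (w : V) (hmax : ∀ v, h v ≤ h w) :
    ∀ v : V, G.Adj w v → a v < a w ∧ h v < h w ∧ a w ≤ a v + h v := by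
  exact neighbors_of_highest_intersect_from_left_general G a h h
    (fun u v huv => (hrep u v huv.ne).1 huv) ha hh w hmax
end
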